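/- arXiv:1806.04645 — 3 statements merged into one kernel-verified Lean document; each statement's English description precedes it below -/
import Mathlib

section
/- Let Σ be any alphabet and let m, n ≥ 3. If P and T are languages over Σ such that P is accepted by some DFA with m states and T is accepted by some DFA with n states, then the language (Σ* ⧢ P) ∩ T = {x ∈ T | some w ∈ P is a subsequence of x} is accepted by some DFA with (2^(m−2)+1)·n states. -/
/-!
Track the set `reach M x` of states that the DFA `M` for `P` can reach on subsequences of `x`. This
is the subset construction for the NFA obtained from `M` by adding all self-loops, so
`reach M (x ++ [a])` is determined by `reach M x` and `a`. It always contains the initial state,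
and once it meets the accepting set it does so forever, so all such sets can be merged into a single
class. A set that misses the accepting states misses in particular a fixed accepting state `f`;
when `f` is not initial, such a set is determined by its trace on the remaining `m - 2` states,
which leaves `2 ^ (m - 2) + 1` classes. Pairing with the state of the DFA for `T` gives the bound.
If `M` has no accepting state, or its initial state accepts, then the language is `∅` or `T`.

The automaton itself comes from a right-congruence criterion (`acceptedByDFAWith_of_invariant`),
which turns an invariant of words with values in a type of at most `k` elements into a `k`-state
DFA, unused states included.
-/

open Language

/-- `L` is accepted by some DFA with exactly `k` states. -/
def AcceptedByDFAWith {α : Type} (L : Language α) (k : ℕ) : Prop :=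
  ∃ M : DFA α (Fin k), M.accepts = L

/-- A function `g` on words, with at most `k` values, whose kernel is a right congruence
saturating `L` yields a `k`-state DFA for `L`. -/
theorem acceptedByDFAWith_of_invariant {α σ : Type} [Finite σ] {L : Language α} {k : ℕ}
    (hk : Nat.card σ ≤ k) (g : List α → σ)
    (hstep : ∀ x y a, g x = g y → g (x ++ [a]) = g (y ++ [a]))
    (hL : ∀ x y, g x = g y → x ∈ L → y ∈ L) : AcceptedByDFAWith L k := by
  classical
  let h : List α → Fin k := fun x => Fin.castLE hk (Finite.equivFin σ (g x))
  have hg : ∀ {x y}, h x = h y → g x = g y := fun e =>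
    (Finite.equivFin σ).injective (Fin.castLE_injective hk e)
  -- The state `q` moves as a chosen word of class `q` does; states that no word reaches stay put.
  let M : DFA α (Fin k) :=
    { step := fun q a => if e : ∃ x, h x = q then h (e.choose ++ [a]) else q
      start := h []
      accept := {q | ∃ x ∈ L, h x = q} }
  have hM : ∀ x, M.eval x = h x := by
    intro x
    induction x using List.reverseRecOn with
    | nil => rfl
    | append_singleton x a ih =>
      rw [DFA.eval_append_singleton, ih]
      have e : ∃ y, h y = h x := ⟨x, rfl⟩
      have h1 : M.step (h x) a = h (e.choose ++ [a]) := dif_pos e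
      rw [h1]
      exact congrArg (fun z => Fin.castLE hk (Finite.equivFin σ z)) (hstep _ _ a (hg e.choose_spec))
  refine ⟨M, ?_⟩
  ext x
  rw [DFA.mem_accepts, hM]
  exact ⟨fun ⟨y, hy, e⟩ => hL _ _ (hg e) hy, fun hx => ⟨x, hx, rfl⟩⟩

/-- The states that `M` reaches on the subsequences of `x`. -/
def reach {α σ : Type} (M : DFA α σ) (x : List α) : Set σ :=
  {q | ∃ w, w.Sublist x ∧ M.eval w = q}

theorem reach_append_singleton {α σ : Type} (M : DFA α σ) (x : List α) (a : α) :
    reach M (x ++ [a]) = reach M x ∪ (fun q => M.step q a) '' reach M x := by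
  ext q
  constructor
  · rintro ⟨w, hw, rfl⟩
    obtain ⟨u, v, rfl, hu, hv⟩ := List.sublist_append_iff.1 hw
    rcases List.sublist_singleton.1 hv with rfl | rfl
    · exact Or.inl ⟨u, hu, by simp⟩
    · exact Or.inr ⟨_, ⟨u, hu, rfl⟩, by simp⟩
  · rintro (⟨w, hw, rfl⟩ | ⟨_, ⟨w, hw, rfl⟩, rfl⟩)
    · exact ⟨w, hw.trans (List.sublist_append_left _ _), rfl⟩
    · exact ⟨w ++ [a], hw.append (List.Sublist.refl _), by simp⟩

theorem start_mem_reach {α σ : Type} (M : DFA α σ) (x : List α) : M.start ∈ reach M x :=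
  ⟨[], List.nil_sublist _, rfl⟩

theorem card_subtype_ne_ne {m : ℕ} {s f : Fin m} (h : s ≠ f) :
    Nat.card {q : Fin m // q ≠ s ∧ q ≠ f} = m - 2 := by
  have e : (Finset.univ.filter fun q : Fin m => q ≠ s ∧ q ≠ f) = {s, f}ᶜ := by
    ext q; simp
  rw [Nat.card_eq_fintype_card, Fintype.card_subtype, e, Finset.card_compl,
    Finset.card_pair h, Fintype.card_fin]

/-- If `P` is accepted by an `m`-state DFA and `T` by an `n`-state DFA, then
`(Σ* ⧢ P) ∩ T = {x ∈ T | some w ∈ P is a subsequence of x}` is accepted by some DFA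
with `(2^(m-2)+1)·n` states. -/
theorem subsequence_matching_upper {α : Type} (m n : ℕ) (hm : 3 ≤ m) (hn : 3 ≤ n)
    (P T : Language α) (hP : AcceptedByDFAWith P m) (hT : AcceptedByDFAWith T n) :
    AcceptedByDFAWith ({x : List α | x ∈ T ∧ ∃ w ∈ P, w.Sublist x} : Language α)
      ((2 ^ (m - 2) + 1) * n) := by
  classical
  obtain ⟨M, rfl⟩ := hP
  obtain ⟨N, rfl⟩ := hT
  suffices key : ∀ L : Language α,
      (∀ x, x ∈ L ↔ N.eval x ∈ N.accept ∧ (reach M x ∩ M.accept).Nonempty) →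
        AcceptedByDFAWith L ((2 ^ (m - 2) + 1) * n) by
    refine key _ fun x => and_congr Iff.rfl ⟨?_, ?_⟩
    · rintro ⟨w, hw, hs⟩
      exact ⟨_, ⟨w, hs, rfl⟩, hw⟩
    · rintro ⟨_, ⟨w, hs, rfl⟩, hw⟩
      exact ⟨w, hw, hs⟩
  intro L hmem
  by_cases hf : M.start ∉ M.accept ∧ ∃ f, f ∈ M.accept
  · obtain ⟨hs, f, hf⟩ := hf
    have hsf : M.start ≠ f := fun e => hs (e ▸ hf)
    let τ := {q : Fin m // q ≠ M.start ∧ q ≠ f}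
    let c : List α → Option (Set τ) := fun x =>
      if (reach M x ∩ M.accept).Nonempty then none else some {q | q.1 ∈ reach M x}
    have hnone : ∀ x, c x = none ↔ (reach M x ∩ M.accept).Nonempty := by
      intro x
      by_cases h : (reach M x ∩ M.accept).Nonempty <;> simp [c, h]
    -- Equal classes: both sets meet the accepting set, or the sets coincide.
    have hc : ∀ x y, c x = c y →
        ((reach M x ∩ M.accept).Nonempty ∧ (reach M y ∩ M.accept).Nonempty) ∨
          reach M x = reach M y := by
      intro x y e
      by_cases hx : (reach M x ∩ M.accept).Nonempty
      · exact Or.inl ⟨hx, (hnone y).1 (e ▸ (hnone x).2 hx)⟩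
      · have hy : ¬ (reach M y ∩ M.accept).Nonempty := fun h =>
          hx ((hnone x).1 (e.trans ((hnone y).2 h)))
        right
        simp only [c, if_neg hx, if_neg hy, Option.some.injEq] at e
        ext q
        by_cases h1 : q = M.start
        · subst h1
          exact iff_of_true (start_mem_reach M x) (start_mem_reach M y)
        by_cases h2 : q = f
        · subst h2
          exact iff_of_false (fun h => hx ⟨q, h, hf⟩) (fun h => hy ⟨q, h, hf⟩)
        exact Set.ext_iff.1 e ⟨q, h1, h2⟩
    refine acceptedByDFAWith_of_invariant (σ := Option (Set τ) × Fin n) ?_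
      (fun x => (c x, N.eval x)) ?_ ?_
    · have h1 : Fintype.card τ = m - 2 := by
        rw [← Nat.card_eq_fintype_card]; exact card_subtype_ne_ne hsf
      rw [Nat.card_eq_fintype_card, Fintype.card_prod, Fintype.card_option, Fintype.card_set,
        Fintype.card_fin, h1]
    · intro x y a e
      obtain ⟨e1, e2⟩ := Prod.mk.inj e
      refine Prod.ext ?_ ?_
      · have hmono : ∀ z, (reach M z ∩ M.accept).Nonempty →
            (reach M (z ++ [a]) ∩ M.accept).Nonempty := fun z h =>
          h.mono (Set.inter_subset_inter_left _
            (by rw [reach_append_singleton]; exact Set.subset_union_left))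
        rcases hc x y e1 with ⟨hx, hy⟩ | h
        · exact ((hnone _).2 (hmono x hx)).trans ((hnone _).2 (hmono y hy)).symm
        · simp only [c, reach_append_singleton, h]
      · simp only [DFA.eval_append_singleton, e2]
    · intro x y e
      obtain ⟨e1, e2⟩ := Prod.mk.inj e
      rw [hmem, hmem, ← hnone, ← hnone, e1, e2]
      exact id
  · refine acceptedByDFAWith_of_invariant (σ := Fin n) ?_ N.eval ?_ ?_
    · rw [Nat.card_eq_fintype_card, Fintype.card_fin]
      exact Nat.le_mul_of_pos_left _ (Nat.succ_pos _)
    · intro x y a e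
      rw [DFA.eval_append_singleton, DFA.eval_append_singleton, e]
    · intro x y e
      rw [hmem, hmem, e]
      rintro ⟨h1, q, -, hq⟩
      have hs : M.start ∈ M.accept := by
        by_contra h
        exact hf ⟨h, q, hq⟩
      exact ⟨h1, _, start_mem_reach M y, hs⟩
end

section
/- For all m ≥ 3 and n ≥ 2, there exist a word w of length m−2 over the two-letter alphabet Σ = {a, b} and a language T over Σ accepted by a DFA with n states, such that every DFA accepting ({w}·Σ*) ∩ T has at least m + n − 1 states. -/
/-!
The witnesses are `w = a ^ k` with `k = m - 2`, and `T`, the set of words whose number of `b`s is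
divisible by `n`; here `a = 0` and `b = 1`. Put `L = {w} · Σ* ∩ T`.

By Myhill–Nerode it suffices to exhibit `k + n + 1` words with pairwise different left quotients
of `L`: the proper prefixes `a ^ i` (`i < k`) of `w`, the words `a ^ k b ^ q` (`q < n`), and `b`.
The last one has the empty quotient. The quotient of `a ^ i` contains `a ^ (k - i)`, no shorter
power of `a`, and no word that starts with `b`. The quotient of `a ^ k b ^ q` contains
`b ^ (n - q)`, a nonempty power of `b`, and by counting modulo `n` it contains no `b ^ (n - p)`
with `p ≠ q` and `p < n`.
-/

open Language

/-- The automaton on `n` states that counts the letters `1` modulo `n` and accepts on residue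
`0`. -/
def countDFA (n : ℕ) (hn : 0 < n) : DFA (Fin 2) (Fin n) where
  step s c := ⟨(s.val + if c = 1 then 1 else 0) % n, Nat.mod_lt _ hn⟩
  start := ⟨0, hn⟩
  accept := {s | s.val = 0}

theorem countDFA_evalFrom (n : ℕ) (hn : 0 < n) (x : List (Fin 2)) (s : Fin n) :
    ((countDFA n hn).evalFrom s x).val = (s.val + x.count 1) % n := by
  induction x generalizing s with
  | nil => simp [Nat.mod_eq_of_lt s.isLt]
  | cons c x ih =>
    rw [DFA.evalFrom_cons, ih, List.count_cons]
    simp only [countDFA, Nat.mod_add_mod, beq_iff_eq]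
    congr 1
    omega

theorem mem_countDFA_accepts (n : ℕ) (hn : 0 < n) (x : List (Fin 2)) :
    x ∈ (countDFA n hn).accepts ↔ n ∣ x.count 1 := by
  have h := countDFA_evalFrom n hn x ⟨0, hn⟩
  rw [zero_add] at h
  rw [Nat.dvd_iff_mod_eq_zero, ← h]
  rfl

theorem mem_singleton_mul_top {α : Type} (w x : List α) :
    x ∈ ({w} : Language α) * (⊤ : Language α) ↔ w <+: x := by
  rw [Language.mem_mul]
  constructor
  · rintro ⟨u, hu, v, -, rfl⟩
    obtain rfl : u = w := hu
    exact List.prefix_append _ _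
  · rintro ⟨v, rfl⟩
    exact ⟨w, rfl, v, trivial, rfl⟩

theorem le_of_replicate_prefix {k i : ℕ} {t : List (Fin 2)}
    (h : List.replicate k 0 <+: List.replicate i 0 ++ 1 :: t) : k ≤ i := by
  by_contra! hik
  have h1 := h.getElem (i := i) (by simpa using hik)
  simp at h1

/-- Words with pairwise different left quotients: `inl i` is the prefix `0 ^ i`, `inr q` is
`0 ^ k 1 ^ q`, and `none` is a word with empty quotient. -/
def reprWord (k n : ℕ) : Option (Fin k ⊕ Fin n) → List (Fin 2)
  | none => [1]
  | some (.inl i) => List.replicate i 0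
  | some (.inr q) => List.replicate k 0 ++ List.replicate q 1

/-- Two representatives with the same quotient (of the words that start with `0 ^ k` and whose
number of `1`s is divisible by `n`) are equal. -/
theorem reprWord_separated {k n : ℕ} (hk : 0 < k) {x y : Option (Fin k ⊕ Fin n)}
    (h : ∀ z : List (Fin 2),
      (List.replicate k 0 <+: reprWord k n x ++ z ∧ n ∣ (reprWord k n x ++ z).count 1) ↔
      (List.replicate k 0 <+: reprWord k n y ++ z ∧ n ∣ (reprWord k n y ++ z).count 1)) :
    x = y := by
  have memA : ∀ i : Fin k,
      List.replicate k 0 <+: reprWord k n (some (.inl i)) ++ List.replicate (k - i) 0 ∧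
      n ∣ (reprWord k n (some (.inl i)) ++ List.replicate (k - i) 0).count 1 := by
    intro i
    have : (i : ℕ) + (k - i) = k := by omega
    simp [reprWord, this, List.count_replicate]
  have memB : ∀ q : Fin n,
      List.replicate k 0 <+: reprWord k n (some (.inr q)) ++ List.replicate (n - q) 1 ∧
      n ∣ (reprWord k n (some (.inr q)) ++ List.replicate (n - q) 1).count 1 := by
    intro q
    have : (q : ℕ) + (n - q) = n := by omega
    simp [reprWord, this, List.count_replicate]
  have dead : ∀ z, ¬ List.replicate k 0 <+: reprWord k n none ++ z := by
    intro z hz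
    have := le_of_replicate_prefix (i := 0) (t := z) (by simpa [reprWord] using hz)
    omega
  have sepAA : ∀ i j : Fin k, i < j →
      ¬ List.replicate k 0 <+: reprWord k n (some (.inl i)) ++ List.replicate (k - j) 0 := by
    intro i j hij hp
    have := hp.length_le
    simp only [reprWord, List.length_append, List.length_replicate] at this
    omega
  have sepAB : ∀ (i : Fin k) (q : Fin n),
      ¬ List.replicate k 0 <+: reprWord k n (some (.inl i)) ++ List.replicate (n - q) 1 := by
    intro i q hp
    obtain ⟨d, hd⟩ : ∃ d, n - (q : ℕ) = d + 1 := ⟨n - q - 1, by omega⟩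
    rw [hd, List.replicate_succ] at hp
    have := le_of_replicate_prefix hp
    omega
  match x, y with
  | none, none => rfl
  | none, some (.inl i) => exact absurd ((h _).2 (memA i)).1 (dead _)
  | none, some (.inr q) => exact absurd ((h _).2 (memB q)).1 (dead _)
  | some (.inl i), none => exact absurd ((h _).1 (memA i)).1 (dead _)
  | some (.inr q), none => exact absurd ((h _).1 (memB q)).1 (dead _)
  | some (.inl i), some (.inr q) => exact absurd ((h _).2 (memB q)).1 (sepAB i q)
  | some (.inr q), some (.inl i) => exact absurd ((h _).1 (memB q)).1 (sepAB i q)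
  | some (.inl i), some (.inl j) =>
    rcases lt_trichotomy i j with hij | rfl | hij
    · exact absurd ((h _).2 (memA j)).1 (sepAA i j hij)
    · rfl
    · exact absurd ((h _).1 (memA i)).1 (sepAA j i hij)
  | some (.inr p), some (.inr q) =>
    have h1 := ((h _).2 (memB q)).2
    simp only [reprWord, List.count_append, List.count_replicate_self, List.count_replicate] at h1
    obtain ⟨c, hc⟩ := h1
    -- `p + (n - q)` lies strictly between `0` and `2 * n`, so divisibility forces it to be `n`.
    have hc1 : c = 1 := by
      have hp := p.isLt
      have hq := q.isLt
      simp at hc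
      have h0 : 0 < n * c := by omega
      have h2 : n * c < n * 2 := by omega
      have := Nat.pos_of_mul_pos_left h0
      have := Nat.lt_of_mul_lt_mul_left h2
      omega
    subst hc1
    simp at hc
    have : p = q := by ext; omega
    rw [this]

/-- Tightness of the `m + n - 1` bound for single-word prefix matching over a binary
alphabet, where the word has length `m - 2`. -/
theorem single_prefix_lower (m n : ℕ) (hm : 3 ≤ m) (hn : 2 ≤ n) :
    ∃ w : List (Fin 2), w.length = m - 2 ∧
      ∃ T : Language (Fin 2), AcceptedByDFAWith T n ∧
        ∀ (σ : Type) [Fintype σ] (D : DFA (Fin 2) σ),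
          D.accepts = (({w} : Language (Fin 2)) * (⊤ : Language (Fin 2))) ⊓ T →
            m + n - 1 ≤ Fintype.card σ := by
  have hn0 : 0 < n := by omega
  refine ⟨List.replicate (m - 2) 0, by simp, (countDFA n hn0).accepts, ⟨_, rfl⟩, ?_⟩
  intro σ _ D hD
  have hmem : ∀ x, x ∈ D.accepts ↔ (List.replicate (m - 2) 0 <+: x ∧ n ∣ x.count 1) := by
    intro x
    rw [hD, ← mem_singleton_mul_top, ← mem_countDFA_accepts n hn0]
    rfl
  have hinj : Function.Injective fun x => D.eval (reprWord (m - 2) n x) := by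
    intro x y hxy
    refine reprWord_separated (by omega) fun z => ?_
    rw [← hmem, ← hmem, DFA.mem_accepts, DFA.mem_accepts, DFA.eval, DFA.evalFrom_of_append,
      DFA.evalFrom_of_append]
    exact iff_of_eq (congrArg (fun s => D.evalFrom s z ∈ D.accept) hxy)
  have hcard := Fintype.card_le_of_injective _ hinj
  simp only [Fintype.card_option, Fintype.card_sum, Fintype.card_fin] at hcard
  omega
end

section
/- Let Σ be any alphabet and let w be a nonempty word over Σ. Then the left ideal Σ*·{w} (the set of all words ending with w) is accepted by some DFA with |w| + 1 states, and every DFA accepting Σ*·{w} has at least |w| + 1 states. (With m = |w| + 2 the state complexity of {w}, the state complexity of Σ*·{w} is exactly m − 1.) -/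
/-!
The words of `Σ*·{w}` are those having `w` as a suffix.

*Upper bound.* After reading `u`, the Knuth–Morris–Pratt automaton `suffixDFA w` remembers the
length `overlap w u` of the longest prefix of `w` that is a suffix of `u`. This number determines
its own update (`overlap_append_singleton`): a nonempty prefix `p·b` of `w` is a suffix of `u·a` iff
`b = a` and `p` is a suffix of `u`, and every prefix of `w` that is a suffix of `u` is already a
suffix of the longest one. There are `|w| + 1` possible overlaps, and `u` ends with `w` exactly when
the overlap is `|w|`.

*Lower bound.* The `|w| + 1` prefixes of `w` lead to distinct states: if the prefixes of lengths
`i < j` led to the same state, then appending the last `|w| - j` letters of `w` to the shorter one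
would give an accepted word shorter than `w`.
-/

open Language

theorem mem_top_mul_singleton {α : Type} (w u : List α) :
    u ∈ (⊤ : Language α) * ({w} : Language α) ↔ w <:+ u := by
  rw [Language.mem_mul]
  constructor
  · rintro ⟨a, -, b, hb, rfl⟩
    obtain rfl : b = w := hb
    exact List.suffix_append _ _
  · rintro ⟨t, rfl⟩
    exact ⟨t, trivial, w, rfl, rfl⟩

open Classical in
/-- The length of the longest prefix of `w` that is a suffix of `u`. -/
noncomputable def overlap {α : Type} (w u : List α) : ℕ :=
  Nat.findGreatest (fun k => w.take k <:+ u) w.length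

theorem overlap_le {α : Type} (w u : List α) : overlap w u ≤ w.length := by
  classical
  exact Nat.findGreatest_le (P := fun k => w.take k <:+ u) _

theorem take_overlap_suffix {α : Type} (w u : List α) : w.take (overlap w u) <:+ u := by
  classical
  exact Nat.findGreatest_spec (P := fun k => w.take k <:+ u) (Nat.zero_le _) (by simp)

theorem le_overlap {α : Type} {w u : List α} {k : ℕ} (hk : k ≤ w.length)
    (h : w.take k <:+ u) : k ≤ overlap w u := by
  classical
  exact Nat.le_findGreatest (P := fun k => w.take k <:+ u) hk h

theorem overlap_eq_length_iff {α : Type} (w u : List α) :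
    overlap w u = w.length ↔ w <:+ u := by
  constructor
  · intro h
    simpa [h] using take_overlap_suffix w u
  · intro h
    exact le_antisymm (overlap_le w u) (le_overlap le_rfl (by simpa using h))

theorem take_suffix_iff {α : Type} {w : List α} (u : List α) {j : ℕ} (hj : j ≤ w.length) :
    w.take j <:+ u ↔ w.take j <:+ w.take (overlap w u) := by
  constructor
  · intro h
    refine List.suffix_of_suffix_length_le h (take_overlap_suffix w u) ?_
    have := le_overlap hj h
    simp only [List.length_take]
    omega
  · intro h
    exact h.trans (take_overlap_suffix w u)

theorem suffix_append_singleton_iff {α : Type} (p u : List α) (b a : α) :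
    p ++ [b] <:+ u ++ [a] ↔ b = a ∧ p <:+ u := by
  rw [← List.reverse_prefix, ← List.reverse_prefix]
  simp [List.cons_prefix_cons]

/-- The overlap after one more letter depends only on that letter and the previous overlap. -/
theorem overlap_append_singleton {α : Type} (w u : List α) (a : α) :
    overlap w (u ++ [a]) = overlap w (w.take (overlap w u) ++ [a]) := by
  have key : ∀ k ≤ w.length,
      (w.take k <:+ u ++ [a] ↔ w.take k <:+ w.take (overlap w u) ++ [a]) := by
    intro k hk
    cases k with
    | zero => simp
    | succ j =>
      rw [List.take_succ_eq_append_getElem (by omega), suffix_append_singleton_iff,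
        suffix_append_singleton_iff, take_suffix_iff u (by omega)]
  apply le_antisymm
  · exact le_overlap (overlap_le _ _) ((key _ (overlap_le _ _)).1 (take_overlap_suffix _ _))
  · exact le_overlap (overlap_le _ _) ((key _ (overlap_le _ _)).2 (take_overlap_suffix _ _))

/-- The Knuth–Morris–Pratt automaton of `w`: state `k` stands for the prefix of `w` of length `k`,
the longest one that is a suffix of the input read so far. -/
noncomputable def suffixDFA {α : Type} (w : List α) : DFA α (Fin (w.length + 1)) where
  step k a := ⟨overlap w (w.take k ++ [a]), Nat.lt_succ_of_le (overlap_le _ _)⟩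
  start := 0
  accept := {Fin.last w.length}

theorem suffixDFA_eval {α : Type} (w u : List α) :
    ((suffixDFA w).eval u : ℕ) = overlap w u := by
  induction u using List.reverseRecOn with
  | nil =>
    have h := (take_overlap_suffix w []).length_le
    have := overlap_le w []
    simp only [List.length_take, List.length_nil] at h
    change 0 = _
    omega
  | append_singleton u a ih =>
    rw [DFA.eval_append_singleton, overlap_append_singleton, ← ih]
    rfl

theorem suffixDFA_accepts {α : Type} (w : List α) :
    (suffixDFA w).accepts = (⊤ : Language α) * ({w} : Language α) := by
  ext u
  rw [mem_top_mul_singleton, DFA.mem_accepts, ← overlap_eq_length_iff, ← suffixDFA_eval]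
  change _ = Fin.last w.length ↔ _
  rw [Fin.ext_iff, Fin.val_last]

/-- Distinct prefixes of `w` are separated by a suffix of `w`, so they reach distinct states. -/
theorem eval_take_ne {α σ : Type} {w : List α} {D : DFA α σ}
    (hD : D.accepts = (⊤ : Language α) * ({w} : Language α)) {i j : ℕ} (hij : i < j)
    (hj : j ≤ w.length) : D.eval (w.take i) ≠ D.eval (w.take j) := by
  intro h
  have hmem : w.take i ++ w.drop j ∈ D.accepts := by
    have hw : w.take j ++ w.drop j ∈ D.accepts := by
      rw [hD, mem_top_mul_singleton, List.take_append_drop]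
    rw [DFA.mem_accepts, DFA.eval, DFA.evalFrom_of_append] at hw ⊢
    unfold DFA.eval at h
    rwa [h]
  rw [hD, mem_top_mul_singleton] at hmem
  have := hmem.length_le
  simp only [List.length_append, List.length_take, List.length_drop] at this
  omega

/-- For a nonempty word `w`, the left ideal `Σ*·{w}` has state complexity exactly
`|w| + 1`. -/
theorem single_suffix_ideal_complexity {α : Type} (w : List α) (hw : w ≠ []) :
    AcceptedByDFAWith ((⊤ : Language α) * ({w} : Language α)) (w.length + 1) ∧
    ∀ (σ : Type) [Fintype σ] (D : DFA α σ),
      D.accepts = (⊤ : Language α) * ({w} : Language α) → w.length + 1 ≤ Fintype.card σ := by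
  refine ⟨⟨suffixDFA w, suffixDFA_accepts w⟩, fun σ _ D hD => ?_⟩
  have hinj : Function.Injective fun i : Fin (w.length + 1) => D.eval (w.take i) := by
    intro i j h
    rcases lt_trichotomy i j with hij | hij | hij
    · exact absurd h (eval_take_ne hD hij (Nat.le_of_lt_succ j.2))
    · exact hij
    · exact absurd h.symm (eval_take_ne hD hij (Nat.le_of_lt_succ i.2))
  simpa using Fintype.card_le_of_injective _ hinj
end
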